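/- arXiv:1002.0144 — 4 statements merged into one kernel-verified Lean document; each statement's English description precedes it below -/
import Mathlib

section
/- Let a, b, c, d : ℝ → ℝ be continuously differentiable with a(t) ≠ 0, let μ : ℝ → ℝ be a twice continuously differentiable solution of the characteristic equation μ′′ − (a′/a + 2c − 2d)μ′ + 4(ab − cd + ca′/(2a) − c′/2)μ = 0 with μ(t) > 0 on an open interval I. Set λ(t) = exp(∫₀ᵗ(c(s) − d(s))ds), α(t) = μ′/(4aμ) − c/(2a), β(t) = k·λ(t)/μ(t) for a real constant k, and let γ : I → ℝ be continuously differentiable with γ′(t) = −a(t)β(t)². Then for each fixed y ∈ ℝ the kernel K(x,y,t) = (2πμ(t))^{−1/2} exp(i(α(t)x² + β(t)xy + γ(t)y²)) satisfies the time-dependent Schrödinger equation i ∂K/∂t = HK on ℝ × I, i.e. i K_t = −a K_xx + b x² K − i c (K + x K_x) − i d x K_x. -/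
/-- λ(t) = exp(∫₀ᵗ (c(s) − d(s)) ds). -/
noncomputable def lamFun (c d : ℝ → ℝ) (t : ℝ) : ℝ :=
  Real.exp (∫ s in (0:ℝ)..t, c s - d s)

/-- α(t) = μ′/(4aμ) − c/(2a). -/
noncomputable def alphaFun (a c μ : ℝ → ℝ) (t : ℝ) : ℝ :=
  deriv μ t / (4 * a t * μ t) - c t / (2 * a t)

/-- β(t) = k·λ(t)/μ(t). -/
noncomputable def betaFun (c d μ : ℝ → ℝ) (k t : ℝ) : ℝ :=
  k * lamFun c d t / μ t

/-- The kernel K(x,y,t) = (2πμ(t))^{−1/2} exp(i(α(t)x² + β(t)xy + γ(t)y²)). -/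
noncomputable def Kker (a c d μ : ℝ → ℝ) (k : ℝ) (γ : ℝ → ℝ) (x y t : ℝ) : ℂ :=
  (1 / Real.sqrt (2 * Real.pi * μ t) : ℝ) *
    Complex.exp (Complex.I *
      ((alphaFun a c μ t : ℂ) * (x : ℂ) ^ 2 + (betaFun c d μ k t : ℂ) * (x : ℂ) * (y : ℂ)
        + (γ t : ℂ) * (y : ℂ) ^ 2))

/-!
Applied to a Gaussian `A(t) exp(i(α(t)x² + β(t)xy + γ(t)y²))`, both sides of `i ∂ψ/∂t = Hψ` are
the Gaussian times a quadratic polynomial in `x` and `y`. Comparing coefficients turns the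
Schrödinger equation into four ordinary differential equations: a Riccati equation for `α`, and
equations for `A`, `β`, `γ` that can be integrated once `α` is known. The substitution
`μ′ / (2μ) = 2aα + c` linearizes the Riccati equation into the characteristic equation and gives
`A ∝ μ^(-1/2)` and `β ∝ λ / μ`.
-/

/-- The Hamiltonian `a p² + b x² + c px + d xp` with `p = -i ∂/∂x`, for given values `a b c d` of
the coefficients, acting on a wave function of one real variable. -/
noncomputable def hamiltonian (a b c d : ℂ) (ψ : ℝ → ℂ) (x : ℝ) : ℂ :=
  -a * deriv (deriv ψ) x + b * (x : ℂ) ^ 2 * ψ x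
    - Complex.I * c * (ψ x + (x : ℂ) * deriv ψ x) - Complex.I * d * ((x : ℂ) * deriv ψ x)

/-- The Gaussian `A(t) exp(i(α(t)x² + β(t)xy + γ(t)y²))` with time-dependent complex amplitude and
phase coefficients: the ansatz of which `Kker` is an instance. -/
noncomputable def gaussianKernel (A α β γ : ℝ → ℂ) (x y t : ℝ) : ℂ :=
  A t * Complex.exp (Complex.I *
    (α t * (x : ℂ) ^ 2 + β t * (x : ℂ) * (y : ℂ) + γ t * (y : ℂ) ^ 2))

/-- The Riccati-type system at time `t` obtained by comparing coefficients of `1`, `x²`, `xy` and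
`y²` in the Schrödinger equation for `gaussianKernel A α β γ`. The numbers `a b c d` are the
coefficients of the Hamiltonian at time `t`. -/
structure RiccatiSystemAt (a b c d : ℂ) (A α β γ : ℝ → ℂ) (t : ℝ) : Prop where
  amplitude : HasDerivAt A (-(2 * a * α t + c) * A t) t
  alpha : HasDerivAt α (-(4 * a * α t ^ 2 + b + 2 * (c + d) * α t)) t
  beta : HasDerivAt β (-(4 * a * α t + c + d) * β t) t
  gamma : HasDerivAt γ (-a * β t ^ 2) t

/-- The characteristic equation `μ′′ - τ μ′ + 4 σ μ = 0` at time `t`. -/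
def CharacteristicEqAt (a b c d μ : ℝ → ℝ) (t : ℝ) : Prop :=
  deriv (deriv μ) t - (deriv a t / a t + 2 * c t - 2 * d t) * deriv μ t
    + 4 * (a t * b t - c t * d t + c t * deriv a t / (2 * a t) - deriv c t / 2) * μ t = 0

section GaussianKernel

variable {A α β γ : ℝ → ℂ}

lemma hasDerivAt_gaussianKernel_space (A α β γ : ℝ → ℂ) (x y t : ℝ) :
    HasDerivAt (fun x' => gaussianKernel A α β γ x' y t)
      (Complex.I * (2 * α t * x + β t * y) * gaussianKernel A α β γ x y t) x := by
  have hx : HasDerivAt (fun x' : ℝ => (x' : ℂ)) 1 x := Complex.ofRealCLM.hasDerivAt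
  have hphase : HasDerivAt
      (fun x' : ℝ => α t * (x' : ℂ) ^ 2 + β t * (x' : ℂ) * (y : ℂ) + γ t * (y : ℂ) ^ 2)
      (2 * α t * x + β t * y) x :=
    ((((hx.fun_pow 2).const_mul (α t)).fun_add ((hx.const_mul (β t)).mul_const (y : ℂ))).add_const
      (γ t * (y : ℂ) ^ 2)).congr_deriv (by push_cast; ring)
  refine ((hphase.const_mul Complex.I).cexp.const_mul (A t)).congr_deriv ?_
  rw [gaussianKernel]
  ring

lemma deriv_deriv_gaussianKernel_space (A α β γ : ℝ → ℂ) (x y t : ℝ) :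
    deriv (deriv fun x' => gaussianKernel A α β γ x' y t) x =
      (2 * Complex.I * α t - (2 * α t * x + β t * y) ^ 2) * gaussianKernel A α β γ x y t := by
  have hx : HasDerivAt (fun x' : ℝ => (x' : ℂ)) 1 x := Complex.ofRealCLM.hasDerivAt
  have hfactor : HasDerivAt (fun x' : ℝ => Complex.I * (2 * α t * x' + β t * y))
      (Complex.I * (2 * α t * 1)) x :=
    ((hx.const_mul (2 * α t)).add_const (β t * y)).const_mul Complex.I
  have hfirst : (deriv fun x' => gaussianKernel A α β γ x' y t) =
      fun x' : ℝ => Complex.I * (2 * α t * x' + β t * y) * gaussianKernel A α β γ x' y t :=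
    funext fun x' => (hasDerivAt_gaussianKernel_space A α β γ x' y t).deriv
  rw [hfirst, (hfactor.fun_mul (hasDerivAt_gaussianKernel_space A α β γ x y t)).deriv]
  linear_combination
    (2 * α t * x + β t * y) ^ 2 * gaussianKernel A α β γ x y t * Complex.I_sq

lemma hamiltonian_gaussianKernel (a b c d : ℂ) (A α β γ : ℝ → ℂ) (x y t : ℝ) :
    hamiltonian a b c d (fun x' => gaussianKernel A α β γ x' y t) x =
      (-Complex.I * (2 * a * α t + c) + a * (2 * α t * x + β t * y) ^ 2 + b * x ^ 2
        + (c + d) * x * (2 * α t * x + β t * y)) * gaussianKernel A α β γ x y t := by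
  rw [hamiltonian, deriv_deriv_gaussianKernel_space,
    (hasDerivAt_gaussianKernel_space A α β γ x y t).deriv]
  linear_combination
    -(c + d) * x * (2 * α t * x + β t * y) * gaussianKernel A α β γ x y t * Complex.I_sq

lemma hasDerivAt_gaussianKernel_time {t : ℝ} {r α' β' γ' : ℂ}
    (hA : HasDerivAt A (r * A t) t) (hα : HasDerivAt α α' t) (hβ : HasDerivAt β β' t)
    (hγ : HasDerivAt γ γ' t) (x y : ℝ) :
    HasDerivAt (fun t' => gaussianKernel A α β γ x y t')
      ((r + Complex.I * (α' * x ^ 2 + β' * x * y + γ' * y ^ 2)) * gaussianKernel A α β γ x y t)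
      t := by
  have hphase : HasDerivAt
      (fun t' => α t' * (x : ℂ) ^ 2 + β t' * (x : ℂ) * (y : ℂ) + γ t' * (y : ℂ) ^ 2)
      (α' * x ^ 2 + β' * x * y + γ' * y ^ 2) t :=
    ((hα.mul_const _).fun_add ((hβ.mul_const _).mul_const _)).fun_add (hγ.mul_const _)
  refine (hA.fun_mul (hphase.const_mul Complex.I).cexp).congr_deriv ?_
  rw [gaussianKernel]
  ring

theorem RiccatiSystemAt.schrodinger {a b c d : ℂ} {t : ℝ}
    (h : RiccatiSystemAt a b c d A α β γ t) (x y : ℝ) :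
    Complex.I * deriv (fun t' => gaussianKernel A α β γ x y t') t =
      hamiltonian a b c d (fun x' => gaussianKernel A α β γ x' y t) x := by
  rw [hamiltonian_gaussianKernel,
    (hasDerivAt_gaussianKernel_time h.amplitude h.alpha h.beta h.gamma x y).deriv]
  linear_combination
    -((4 * a * α t ^ 2 + b + 2 * (c + d) * α t) * x ^ 2 + (4 * a * α t + c + d) * β t * x * y
      + a * β t ^ 2 * y ^ 2) * gaussianKernel A α β γ x y t * Complex.I_sq

end GaussianKernel

section Coefficients

variable {a b c d μ γ : ℝ → ℝ} {t : ℝ}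

lemma deriv_div_two_mul_eq_alphaFun (c : ℝ → ℝ) (ha : a t ≠ 0) (hμ : μ t ≠ 0) :
    deriv μ t / (2 * μ t) = 2 * a t * alphaFun a c μ t + c t := by
  unfold alphaFun
  field_simp
  ring

lemma hasDerivAt_one_div_sqrt {f : ℝ → ℝ} {f' : ℝ} (hf : HasDerivAt f f' t) (hpos : 0 < f t) :
    HasDerivAt (fun s => 1 / √(f s)) (-(f' / (2 * f t)) * (1 / √(f t))) t := by
  have hsqrt : √(f t) ≠ 0 := (Real.sqrt_pos.2 hpos).ne'
  simp only [one_div]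
  refine ((hf.sqrt hpos.ne').fun_inv hsqrt).congr_deriv ?_
  rw [Real.sq_sqrt hpos.le]
  field_simp

lemma hasDerivAt_kernelAmplitude (c : ℝ → ℝ) (ha : a t ≠ 0) (hμ : DifferentiableAt ℝ μ t)
    (hpos : 0 < μ t) :
    HasDerivAt (fun s => 1 / √(2 * Real.pi * μ s))
      (-(2 * a t * alphaFun a c μ t + c t) * (1 / √(2 * Real.pi * μ t))) t := by
  rw [← deriv_div_two_mul_eq_alphaFun c ha hpos.ne']
  refine (hasDerivAt_one_div_sqrt (hμ.hasDerivAt.const_mul (2 * Real.pi))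
    (by positivity)).congr_deriv ?_
  field_simp

lemma hasDerivAt_alphaFun (ha : DifferentiableAt ℝ a t) (hc : DifferentiableAt ℝ c t)
    (ha₀ : a t ≠ 0) (hμ : DifferentiableAt ℝ μ t) (hμ' : DifferentiableAt ℝ (deriv μ) t)
    (hμ₀ : μ t ≠ 0) (hchar : CharacteristicEqAt a b c d μ t) :
    HasDerivAt (alphaFun a c μ)
      (-(4 * a t * alphaFun a c μ t ^ 2 + b t + 2 * (c t + d t) * alphaFun a c μ t)) t := by
  have hquot := (hμ'.hasDerivAt.fun_div ((ha.hasDerivAt.const_mul 4).fun_mul hμ.hasDerivAt)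
      (by simp [ha₀, hμ₀])).fun_sub
    (hc.hasDerivAt.fun_div (ha.hasDerivAt.const_mul 2) (by simp [ha₀]))
  refine hquot.congr_deriv ?_
  have hμ'' : deriv (deriv μ) t = (deriv a t / a t + 2 * c t - 2 * d t) * deriv μ t
      - 4 * (a t * b t - c t * d t + c t * deriv a t / (2 * a t) - deriv c t / 2) * μ t := by
    unfold CharacteristicEqAt at hchar
    linarith
  unfold alphaFun
  rw [hμ'']
  field_simp
  ring

lemma hasDerivAt_lamFun (hcd : Continuous fun s => c s - d s) (t : ℝ) :
    HasDerivAt (lamFun c d) (lamFun c d t * (c t - d t)) t :=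
  (hcd.integral_hasStrictDerivAt 0 t).hasDerivAt.exp

lemma hasDerivAt_betaFun (k : ℝ) (hcd : Continuous fun s => c s - d s) (ha : a t ≠ 0)
    (hμ : DifferentiableAt ℝ μ t) (hμ₀ : μ t ≠ 0) :
    HasDerivAt (betaFun c d μ k)
      (-(4 * a t * alphaFun a c μ t + c t + d t) * betaFun c d μ k t) t := by
  refine (((hasDerivAt_lamFun hcd t).const_mul k).fun_div hμ.hasDerivAt hμ₀).congr_deriv ?_
  unfold alphaFun betaFun
  field_simp
  ring

lemma riccatiSystemAt_of_characteristicEqAt {k : ℝ} (ha : DifferentiableAt ℝ a t)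
    (hc : DifferentiableAt ℝ c t) (hcd : Continuous fun s => c s - d s) (ha₀ : a t ≠ 0)
    (hμ : DifferentiableAt ℝ μ t) (hμ' : DifferentiableAt ℝ (deriv μ) t)
    (hchar : CharacteristicEqAt a b c d μ t) (hpos : 0 < μ t)
    (hγ : HasDerivAt γ (-(a t) * betaFun c d μ k t ^ 2) t) :
    RiccatiSystemAt (a t) (b t) (c t) (d t) (fun s => (1 / √(2 * Real.pi * μ s) : ℝ))
      (fun s => alphaFun a c μ s) (fun s => betaFun c d μ k s) (fun s => γ s) t where
  amplitude := by exact_mod_cast (hasDerivAt_kernelAmplitude c ha₀ hμ hpos).ofReal_comp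
  alpha := by exact_mod_cast (hasDerivAt_alphaFun ha hc ha₀ hμ hμ' hpos.ne' hchar).ofReal_comp
  beta := by exact_mod_cast (hasDerivAt_betaFun k hcd ha₀ hμ hpos.ne').ofReal_comp
  gamma := by exact_mod_cast hγ.ofReal_comp

theorem statement_5_general {k : ℝ} (ha : DifferentiableAt ℝ a t)
    (hc : DifferentiableAt ℝ c t) (hcd : Continuous fun s => c s - d s) (ha₀ : a t ≠ 0)
    (hμ : DifferentiableAt ℝ μ t) (hμ' : DifferentiableAt ℝ (deriv μ) t)
    (hchar : CharacteristicEqAt a b c d μ t) (hpos : 0 < μ t)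
    (hγ : HasDerivAt γ (-(a t) * betaFun c d μ k t ^ 2) t) (x y : ℝ) :
    Complex.I * deriv (fun t' => Kker a c d μ k γ x y t') t =
      hamiltonian (a t) (b t) (c t) (d t) (fun x' => Kker a c d μ k γ x' y t) x :=
  (riccatiSystemAt_of_characteristicEqAt ha hc hcd ha₀ hμ hμ' hchar hpos hγ).schrodinger x y

end Coefficients

/-- for any solution μ of the characteristic equation, positive on an open
interval (t₁,t₂), and any γ with γ′ = −aβ², the kernel
K(x,y,t) = (2πμ)^{−1/2} exp(i(αx² + βxy + γy²)) satisfies, for each fixed y, the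
time-dependent Schrödinger equation i K_t = HK. -/
theorem statement_5
    (a b c d μ γ : ℝ → ℝ) (k t₁ t₂ : ℝ)
    (ha : ContDiff ℝ 1 a) (hb : ContDiff ℝ 1 b)
    (hc : ContDiff ℝ 1 c) (hd : ContDiff ℝ 1 d)
    (hane : ∀ t, a t ≠ 0)
    (hμ : ContDiff ℝ 2 μ)
    -- the characteristic equation μ′′ − (a′/a + 2c − 2d)μ′ + 4σμ = 0
    (hchar : ∀ t, deriv (deriv μ) t - (deriv a t / a t + 2 * c t - 2 * d t) * deriv μ t
        + 4 * (a t * b t - c t * d t + c t * deriv a t / (2 * a t) - deriv c t / 2)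
          * μ t = 0)
    (hμpos : ∀ t ∈ Set.Ioo t₁ t₂, 0 < μ t)
    -- γ is continuously differentiable with γ′ = −aβ²
    (hγ : ∀ t ∈ Set.Ioo t₁ t₂, HasDerivAt γ (-(a t) * (betaFun c d μ k t) ^ 2) t)
    (hγC : ContinuousOn (fun t => -(a t) * (betaFun c d μ k t) ^ 2) (Set.Ioo t₁ t₂)) :
    ∀ y x : ℝ, ∀ t ∈ Set.Ioo t₁ t₂,
      Complex.I * deriv (fun t' => Kker a c d μ k γ x y t') t =
        -(a t : ℂ) * deriv (fun x' => deriv (fun x'' => Kker a c d μ k γ x'' y t) x') x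
          + (b t : ℂ) * (x : ℂ) ^ 2 * Kker a c d μ k γ x y t
          - Complex.I * (c t : ℂ) *
              (Kker a c d μ k γ x y t + (x : ℂ) * deriv (fun x' => Kker a c d μ k γ x' y t) x)
          - Complex.I * (d t : ℂ) *
              ((x : ℂ) * deriv (fun x' => Kker a c d μ k γ x' y t) x) := by
  intro y x t ht
  exact statement_5_general (ha.differentiable one_ne_zero t) (hc.differentiable one_ne_zero t)
    (hc.continuous.sub hd.continuous) (hane t) (hμ.differentiable two_ne_zero t)
    (hμ.deriv'.differentiable one_ne_zero t) (hchar t) (hμpos t ht) (hγ t ht) x y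
end

section
/- (Phase equation.) Let a, b, c, d : ℝ → ℝ with a, c, d continuously differentiable, b continuous, a(t) ≠ 0 on an open interval I, and Q(t) = 4ab + (a′/a − c − d)(c+d) − c′ − d′. Let C₀ > 0, let κ₁ : I → ℝ be a twice continuously differentiable nonvanishing solution of the homogeneous equation κ₁′′ − (a′/a)κ₁′ + Qκ₁ = 0, and let κ : I → ℝ be a twice continuously differentiable nonvanishing solution of κ′′ − (a′/a)κ′ + Qκ = C₀(2a)²/κ³. Set W = κ₁κ′ − κ₁′κ and define φ(t) = arctan((κ/κ₁)·W/(2a√C₀)). Then φ is differentiable on I and φ′(t) = 2√C₀·a(t)/κ(t)² for all t ∈ I. -/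
/-- Q(t) = 4ab + (a′/a − c − d)(c+d) − c′ − d′. -/
noncomputable def Qfun (a b c d : ℝ → ℝ) (t : ℝ) : ℝ :=
  4 * a t * b t + (deriv a t / a t - c t - d t) * (c t + d t) - deriv c t - deriv d t

/-- The Wronskian W = κ₁κ′ − κ₁′κ. -/
noncomputable def Wfun (κ₁ κ : ℝ → ℝ) (t : ℝ) : ℝ :=
  κ₁ t * deriv κ t - deriv κ₁ t * κ t

/-- The phase φ(t) = arctan((κ/κ₁)·W/(2a√C₀)). -/
noncomputable def phiFun (a κ₁ κ : ℝ → ℝ) (C₀ t : ℝ) : ℝ :=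
  Real.arctan ((κ t / κ₁ t) * (Wfun κ₁ κ t / (2 * a t * Real.sqrt C₀)))

/-!
Put `s = √C₀`, `u = κ / κ₁` and `v = W / (2as)`, so that `φ = arctan (uv)`. The quotient rule gives
`u' = W / κ₁² = 2as · v / κ₁²`. Since `a` is an integrating factor for the Wronskian, the two
equations give `v' = κ₁ · C₀(2a)² / κ³ / (2as) = 2as · κ₁ / κ³`. Hence
`(uv)' = 2as (v² / κ₁² + 1 / κ²) = (2as / κ²) (1 + (uv)²)`, and the last factor is exactly the one
that the derivative of `arctan` cancels.
-/

theorem differentiableAt_deriv_of_contDiffAt_two {𝕜 F : Type*} [NontriviallyNormedField 𝕜]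
    [NormedAddCommGroup F] [NormedSpace 𝕜 F] {f : 𝕜 → F} {t : 𝕜} (hf : ContDiffAt 𝕜 2 f t) :
    DifferentiableAt 𝕜 (deriv f) t :=
  (hf.derivWithin (m := 1) (by norm_num)).differentiableAt one_ne_zero

theorem hasDerivAt_arctan_of_riccati {f : ℝ → ℝ} {m t : ℝ}
    (hf : HasDerivAt f (m * (1 + f t ^ 2)) t) :
    HasDerivAt (fun r => Real.arctan (f r)) m t := by
  have hpos : 1 + f t ^ 2 ≠ 0 := by positivity
  exact hf.arctan.congr_deriv (by field_simp)

section Wronskian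

variable {x y : ℝ → ℝ} {t : ℝ}

theorem hasDerivAt_div_eq_Wfun_div_sq (hx : DifferentiableAt ℝ x t) (hy : DifferentiableAt ℝ y t)
    (hxt : x t ≠ 0) : HasDerivAt (fun r => y r / x r) (Wfun x y t / x t ^ 2) t :=
  (hy.hasDerivAt.fun_div hx.hasDerivAt hxt).congr_deriv (by rw [Wfun]; ring)

theorem hasDerivAt_Wfun (hx : DifferentiableAt ℝ x t) (hy : DifferentiableAt ℝ y t)
    (hx' : DifferentiableAt ℝ (deriv x) t) (hy' : DifferentiableAt ℝ (deriv y) t) :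
    HasDerivAt (Wfun x y) (x t * deriv (deriv y) t - deriv (deriv x) t * y t) t :=
  ((hx.hasDerivAt.mul hy'.hasDerivAt).sub (hx'.hasDerivAt.mul hy.hasDerivAt)).congr_deriv (by ring)

theorem hasDerivAt_Wfun_div {a : ℝ → ℝ} {q f g : ℝ}
    (ha : DifferentiableAt ℝ a t) (hat : a t ≠ 0)
    (hx : DifferentiableAt ℝ x t) (hy : DifferentiableAt ℝ y t)
    (hx' : DifferentiableAt ℝ (deriv x) t) (hy' : DifferentiableAt ℝ (deriv y) t)
    (hxf : deriv (deriv x) t - deriv a t / a t * deriv x t + q * x t = f)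
    (hyg : deriv (deriv y) t - deriv a t / a t * deriv y t + q * y t = g) :
    HasDerivAt (fun r => Wfun x y r / a r) ((x t * g - f * y t) / a t) t := by
  have abel : x t * deriv (deriv y) t - deriv (deriv x) t * y t =
      deriv a t / a t * Wfun x y t + (x t * g - f * y t) := by
    rw [Wfun]
    linear_combination x t * hyg - y t * hxf
  refine ((hasDerivAt_Wfun hx hy hx' hy').fun_div ha.hasDerivAt hat).congr_deriv ?_
  rw [abel]
  field_simp
  ring

end Wronskian

section Phase

variable {a κ₁ κ : ℝ → ℝ} {q s t : ℝ}

theorem hasDerivAt_Wfun_div_of_ermakov (hs : s ≠ 0)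
    (ha : DifferentiableAt ℝ a t) (hat : a t ≠ 0)
    (hκ₁ : DifferentiableAt ℝ κ₁ t) (hκ : DifferentiableAt ℝ κ t)
    (hκ₁' : DifferentiableAt ℝ (deriv κ₁) t) (hκ' : DifferentiableAt ℝ (deriv κ) t)
    (hhom : deriv (deriv κ₁) t - deriv a t / a t * deriv κ₁ t + q * κ₁ t = 0)
    (herm : deriv (deriv κ) t - deriv a t / a t * deriv κ t + q * κ t =
      s ^ 2 * (2 * a t) ^ 2 / κ t ^ 3) :
    HasDerivAt (fun r => Wfun κ₁ κ r / (2 * a r * s)) (2 * a t * s * (κ₁ t / κ t ^ 3)) t := by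
  have hW := (hasDerivAt_Wfun_div ha hat hκ₁ hκ hκ₁' hκ' hhom herm).div_const (2 * s)
  simp only [div_div, mul_left_comm _ (2 : ℝ), ← mul_assoc] at hW
  refine hW.congr_deriv ?_
  field_simp
  ring

theorem hasDerivAt_tan_phase_of_ermakov (hs : s ≠ 0)
    (ha : DifferentiableAt ℝ a t) (hat : a t ≠ 0)
    (hκ₁ : DifferentiableAt ℝ κ₁ t) (hκ : DifferentiableAt ℝ κ t)
    (hκ₁' : DifferentiableAt ℝ (deriv κ₁) t) (hκ' : DifferentiableAt ℝ (deriv κ) t)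
    (hκ₁t : κ₁ t ≠ 0) (hκt : κ t ≠ 0)
    (hhom : deriv (deriv κ₁) t - deriv a t / a t * deriv κ₁ t + q * κ₁ t = 0)
    (herm : deriv (deriv κ) t - deriv a t / a t * deriv κ t + q * κ t =
      s ^ 2 * (2 * a t) ^ 2 / κ t ^ 3) :
    HasDerivAt (fun r => κ r / κ₁ r * (Wfun κ₁ κ r / (2 * a r * s)))
      (2 * s * a t / κ t ^ 2 * (1 + (κ t / κ₁ t * (Wfun κ₁ κ t / (2 * a t * s))) ^ 2)) t := by
  have hu := hasDerivAt_div_eq_Wfun_div_sq hκ₁ hκ hκ₁t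
  have hv := hasDerivAt_Wfun_div_of_ermakov hs ha hat hκ₁ hκ hκ₁' hκ' hhom herm
  refine (hu.fun_mul hv).congr_deriv ?_
  field_simp
  ring

end Phase

theorem statement_16_general {a κ₁ κ : ℝ → ℝ} {q C₀ t : ℝ} (hC₀ : 0 < C₀)
    (ha : DifferentiableAt ℝ a t) (hat : a t ≠ 0)
    (hκ₁ : ContDiffAt ℝ 2 κ₁ t) (hκ : ContDiffAt ℝ 2 κ t)
    (hκ₁t : κ₁ t ≠ 0) (hκt : κ t ≠ 0)
    (hhom : deriv (deriv κ₁) t - deriv a t / a t * deriv κ₁ t + q * κ₁ t = 0)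
    (herm : deriv (deriv κ) t - deriv a t / a t * deriv κ t + q * κ t =
      C₀ * (2 * a t) ^ 2 / κ t ^ 3) :
    HasDerivAt (phiFun a κ₁ κ C₀) (2 * Real.sqrt C₀ * a t / κ t ^ 2) t :=
  hasDerivAt_arctan_of_riccati <|
    hasDerivAt_tan_phase_of_ermakov (Real.sqrt_ne_zero'.2 hC₀) ha hat
      (hκ₁.differentiableAt two_ne_zero) (hκ.differentiableAt two_ne_zero)
      (differentiableAt_deriv_of_contDiffAt_two hκ₁) (differentiableAt_deriv_of_contDiffAt_two hκ)
      hκ₁t hκt hhom (by rwa [Real.sq_sqrt hC₀.le])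

/-- Phase equation: if κ₁ solves the homogeneous equation and κ solves
the Ermakov equation with C₀ > 0 on an open interval (t₁,t₂), then
φ = arctan((κ/κ₁)W/(2a√C₀)) is differentiable with φ′ = 2√C₀·a/κ². -/
theorem statement_16
    (a b c d κ₁ κ : ℝ → ℝ) (t₁ t₂ : ℝ) (C₀ : ℝ) (hC₀ : 0 < C₀)
    (ha : ContDiff ℝ 1 a) (hc : ContDiff ℝ 1 c) (hd : ContDiff ℝ 1 d)
    (hb : Continuous b)
    (hane : ∀ t ∈ Set.Ioo t₁ t₂, a t ≠ 0)
    (hκ₁ : ContDiffOn ℝ 2 κ₁ (Set.Ioo t₁ t₂)) (hκ : ContDiffOn ℝ 2 κ (Set.Ioo t₁ t₂))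
    (hκ₁ne : ∀ t ∈ Set.Ioo t₁ t₂, κ₁ t ≠ 0) (hκne : ∀ t ∈ Set.Ioo t₁ t₂, κ t ≠ 0)
    (hEq1 : ∀ t ∈ Set.Ioo t₁ t₂, deriv (deriv κ₁) t - (deriv a t / a t) * deriv κ₁ t
        + Qfun a b c d t * κ₁ t = 0)
    (hEq : ∀ t ∈ Set.Ioo t₁ t₂, deriv (deriv κ) t - (deriv a t / a t) * deriv κ t
        + Qfun a b c d t * κ t = C₀ * (2 * a t) ^ 2 / κ t ^ 3) :
    ∀ t ∈ Set.Ioo t₁ t₂,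
      HasDerivAt (phiFun a κ₁ κ C₀) (2 * Real.sqrt C₀ * a t / κ t ^ 2) t := by
  intro t ht
  have hI : Set.Ioo t₁ t₂ ∈ nhds t := isOpen_Ioo.mem_nhds ht
  exact statement_16_general hC₀ (ha.differentiable one_ne_zero t) (hane t ht)
    (hκ₁.contDiffAt hI) (hκ.contDiffAt hI) (hκ₁ne t ht) (hκne t ht) (hEq1 t ht) (hEq t ht)
end

section
/- (Constancy of the phase parameter.) Let a, b, c, d : ℝ → ℝ with a, c, d continuously differentiable, b continuous, a(t) ≠ 0 on an open interval I, and Q(t) = 4ab + (a′/a − c − d)(c+d) − c′ − d′. Let C₀ > 0, let κ₁ : I → ℝ be a nonvanishing twice continuously differentiable solution of κ₁′′ − (a′/a)κ₁′ + Qκ₁ = 0, let κ : I → ℝ be a nonvanishing twice continuously differentiable solution of κ′′ − (a′/a)κ′ + Qκ = C₀(2a)²/κ³, set W = κ₁κ′ − κ₁′κ, δ(t) = C₀^{1/4}/√(C₀(κ₁/κ)² + (W/(2a))²), and let γ : I → ℝ be differentiable with γ′(t) + a(t)/κ₁(t)² = 0. Then the function t ↦ γ(t) + (δ(t)²/(2√C₀))·(κ(t)/κ₁(t))·(W(t)/(2a(t)))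 has derivative identically zero on I. -/
/-- δ(t) = C₀^{1/4}/√(C₀(κ₁/κ)² + (W/(2a))²). -/
noncomputable def deltaFun (a κ₁ κ : ℝ → ℝ) (C₀ t : ℝ) : ℝ :=
  C₀ ^ ((1 : ℝ) / 4) /
    Real.sqrt (C₀ * (κ₁ t / κ t) ^ 2 + (Wfun κ₁ κ t / (2 * a t)) ^ 2)

/-! With `V = W/(2a)`, Lagrange's identity turns the two equations into `V′ = 2aC₀κ₁/κ³`, with no
trace of the potential `Q`. Together with `(κ₁/κ)′ = -W/κ²` this makes `E = C₀(κ₁/κ)² + V²`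
constant, and together with `(κ/κ₁)′ = W/κ₁²` it gives `((κ/κ₁)V)′ = (2a/κ₁²)E`. Since
`δ²/(2√C₀) = 1/(2E)`, the second term of the phase has derivative `a/κ₁²`, which cancels `γ′`. -/

/-- The operator `κ ↦ κ′′ - (a′/a)κ′ + Qκ` on the left-hand side of the auxiliary equation, for an
arbitrary potential `Q`. The derivatives are those of `deriv`, so the value is meaningful only where
`κ` is twice differentiable and `a` is differentiable and nonzero. -/
noncomputable def auxiliaryOperator (a Q κ : ℝ → ℝ) (t : ℝ) : ℝ :=
  deriv (deriv κ) t - deriv a t / a t * deriv κ t + Q t * κ t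

/-- The Ermakov invariant `C₀(κ₁/κ)² + (W/(2a))²` of a pair `κ₁`, `κ`, which is the quantity under
the square root in `deltaFun`. -/
noncomputable def ermakovInvariant (a κ₁ κ : ℝ → ℝ) (C₀ t : ℝ) : ℝ :=
  C₀ * (κ₁ t / κ t) ^ 2 + (Wfun κ₁ κ t / (2 * a t)) ^ 2

theorem differentiableOn_deriv_of_contDiffOn_two {f : ℝ → ℝ} {s : Set ℝ} (hs : IsOpen s)
    (hf : ContDiffOn ℝ 2 f s) : DifferentiableOn ℝ (deriv f) s :=
  (hf.deriv_of_isOpen hs (m := 1) (by norm_num)).differentiableOn one_ne_zero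

section Wronskian

variable {f g : ℝ → ℝ} {t : ℝ}

theorem Wfun_swap (f g : ℝ → ℝ) (t : ℝ) : Wfun g f t = -Wfun f g t := by
  unfold Wfun
  ring

theorem hasDerivAt_Wfun_s18 (hf : DifferentiableAt ℝ f t) (hg : DifferentiableAt ℝ g t)
    (hf' : DifferentiableAt ℝ (deriv f) t) (hg' : DifferentiableAt ℝ (deriv g) t) :
    HasDerivAt (Wfun f g) (f t * deriv (deriv g) t - deriv (deriv f) t * g t) t := by
  refine ((hf.hasDerivAt.mul hg'.hasDerivAt).sub
    (hf'.hasDerivAt.mul hg.hasDerivAt)).congr_deriv ?_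
  ring

theorem hasDerivAt_div_Wfun (hf : DifferentiableAt ℝ f t) (hg : DifferentiableAt ℝ g t)
    (hft : f t ≠ 0) :
    HasDerivAt (fun s => g s / f s) (Wfun f g t / f t ^ 2) t := by
  refine (hg.hasDerivAt.fun_div hf.hasDerivAt hft).congr_deriv ?_
  unfold Wfun
  ring

theorem hasDerivAt_Wfun_div_two_mul {a : ℝ → ℝ} (Q : ℝ → ℝ)
    (ha : DifferentiableAt ℝ a t) (hat : a t ≠ 0)
    (hf : DifferentiableAt ℝ f t) (hg : DifferentiableAt ℝ g t)
    (hf' : DifferentiableAt ℝ (deriv f) t) (hg' : DifferentiableAt ℝ (deriv g) t) :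
    HasDerivAt (fun s => Wfun f g s / (2 * a s))
      ((f t * auxiliaryOperator a Q g t - auxiliaryOperator a Q f t * g t) / (2 * a t)) t := by
  refine ((hasDerivAt_Wfun_s18 hf hg hf' hg').fun_div (ha.hasDerivAt.const_mul 2)
    (mul_ne_zero two_ne_zero hat)).congr_deriv ?_
  unfold auxiliaryOperator Wfun
  field_simp
  ring

end Wronskian

theorem ermakovInvariant_nonneg (a κ₁ κ : ℝ → ℝ) {C₀ : ℝ} (hC₀ : 0 ≤ C₀) (t : ℝ) :
    0 ≤ ermakovInvariant a κ₁ κ C₀ t := by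
  unfold ermakovInvariant
  positivity

theorem ermakovInvariant_pos (a : ℝ → ℝ) {κ₁ κ : ℝ → ℝ} {C₀ t : ℝ} (hC₀ : 0 < C₀)
    (hκ₁t : κ₁ t ≠ 0) (hκt : κ t ≠ 0) : 0 < ermakovInvariant a κ₁ κ C₀ t := by
  have hratio : 0 < (κ₁ t / κ t) ^ 2 := sq_pos_iff.mpr (div_ne_zero hκ₁t hκt)
  exact add_pos_of_pos_of_nonneg (mul_pos hC₀ hratio) (sq_nonneg _)

theorem deltaFun_sq_div_two_mul_sqrt (a κ₁ κ : ℝ → ℝ) {C₀ : ℝ} (hC₀ : 0 < C₀) (t : ℝ) :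
    deltaFun a κ₁ κ C₀ t ^ 2 / (2 * √C₀) = (2 * ermakovInvariant a κ₁ κ C₀ t)⁻¹ := by
  have hnum : (C₀ ^ ((1 : ℝ) / 4)) ^ 2 = √C₀ := by
    rw [Real.sqrt_eq_rpow, ← Real.rpow_mul_natCast hC₀.le]
    norm_num
  have hdelta : deltaFun a κ₁ κ C₀ t ^ 2 = √C₀ / ermakovInvariant a κ₁ κ C₀ t := by
    rw [← hnum, ← Real.sq_sqrt (ermakovInvariant_nonneg a κ₁ κ hC₀.le t), ← div_pow]
    rfl
  have hsqrt : √C₀ ≠ 0 := (Real.sqrt_pos.mpr hC₀).ne'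
  rw [hdelta]
  field_simp

section Ermakov

variable {a Q κ₁ κ : ℝ → ℝ} {C₀ t : ℝ}

theorem hasDerivAt_Wfun_div_two_mul_of_ermakov
    (ha : DifferentiableAt ℝ a t) (hat : a t ≠ 0)
    (hκ₁ : DifferentiableAt ℝ κ₁ t) (hκ₁' : DifferentiableAt ℝ (deriv κ₁) t)
    (hκ : DifferentiableAt ℝ κ t) (hκ' : DifferentiableAt ℝ (deriv κ) t)
    (hhom : auxiliaryOperator a Q κ₁ t = 0)
    (herm : auxiliaryOperator a Q κ t = C₀ * (2 * a t) ^ 2 / κ t ^ 3) :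
    HasDerivAt (fun s => Wfun κ₁ κ s / (2 * a s)) (2 * a t * C₀ * κ₁ t / κ t ^ 3) t := by
  refine (hasDerivAt_Wfun_div_two_mul Q ha hat hκ₁ hκ hκ₁' hκ').congr_deriv ?_
  rw [hhom, herm]
  field_simp
  ring

theorem hasDerivAt_ermakovInvariant (hat : a t ≠ 0)
    (hκ₁ : DifferentiableAt ℝ κ₁ t) (hκ : DifferentiableAt ℝ κ t) (hκt : κ t ≠ 0)
    (hV : HasDerivAt (fun s => Wfun κ₁ κ s / (2 * a s)) (2 * a t * C₀ * κ₁ t / κ t ^ 3) t) :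
    HasDerivAt (ermakovInvariant a κ₁ κ C₀) 0 t := by
  have hratio : HasDerivAt (fun s => κ₁ s / κ s) (-Wfun κ₁ κ t / κ t ^ 2) t :=
    Wfun_swap κ₁ κ t ▸ hasDerivAt_div_Wfun hκ hκ₁ hκt
  refine (((hratio.fun_pow 2).const_mul C₀).fun_add (hV.fun_pow 2)).congr_deriv ?_
  simp only [Nat.cast_ofNat, Nat.add_one_sub_one, pow_one]
  field_simp
  ring

theorem hasDerivAt_div_mul_Wfun_div_two_mul (hat : a t ≠ 0)
    (hκ₁ : DifferentiableAt ℝ κ₁ t) (hκ₁t : κ₁ t ≠ 0) (hκ : DifferentiableAt ℝ κ t)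
    (hV : HasDerivAt (fun s => Wfun κ₁ κ s / (2 * a s)) (2 * a t * C₀ * κ₁ t / κ t ^ 3) t) :
    HasDerivAt (fun s => κ s / κ₁ s * (Wfun κ₁ κ s / (2 * a s)))
      (2 * a t / κ₁ t ^ 2 * ermakovInvariant a κ₁ κ C₀ t) t := by
  refine ((hasDerivAt_div_Wfun hκ₁ hκ hκ₁t).fun_mul hV).congr_deriv ?_
  unfold ermakovInvariant
  field_simp
  ring

end Ermakov

theorem statement_18_general {a Q κ₁ κ γ : ℝ → ℝ} {I : Set ℝ} (hI : IsOpen I)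
    {C₀ : ℝ} (hC₀ : 0 < C₀)
    (ha : DifferentiableOn ℝ a I) (hane : ∀ t ∈ I, a t ≠ 0)
    (hκ₁ : DifferentiableOn ℝ κ₁ I) (hκ₁' : DifferentiableOn ℝ (deriv κ₁) I)
    (hκ : DifferentiableOn ℝ κ I) (hκ' : DifferentiableOn ℝ (deriv κ) I)
    (hκ₁ne : ∀ t ∈ I, κ₁ t ≠ 0) (hκne : ∀ t ∈ I, κ t ≠ 0)
    (hhom : ∀ t ∈ I, auxiliaryOperator a Q κ₁ t = 0)
    (herm : ∀ t ∈ I, auxiliaryOperator a Q κ t = C₀ * (2 * a t) ^ 2 / κ t ^ 3)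
    (hγ : ∀ t ∈ I, HasDerivAt γ (-(a t) / κ₁ t ^ 2) t) {t : ℝ} (ht : t ∈ I) :
    HasDerivAt (fun s => γ s + deltaFun a κ₁ κ C₀ s ^ 2 / (2 * √C₀)
      * (κ s / κ₁ s) * (Wfun κ₁ κ s / (2 * a s))) 0 t := by
  have hIt : I ∈ nhds t := hI.mem_nhds ht
  have hκ₁d := hκ₁.differentiableAt hIt
  have hκd := hκ.differentiableAt hIt
  have hV := hasDerivAt_Wfun_div_two_mul_of_ermakov (ha.differentiableAt hIt) (hane t ht) hκ₁d
    (hκ₁'.differentiableAt hIt) hκd (hκ'.differentiableAt hIt) (hhom t ht) (herm t ht)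
  have hE := hasDerivAt_ermakovInvariant (hane t ht) hκ₁d hκd (hκne t ht) hV
  have hE_ne : ermakovInvariant a κ₁ κ C₀ t ≠ 0 :=
    (ermakovInvariant_pos a hC₀ (hκ₁ne t ht) (hκne t ht)).ne'
  have hprod := hasDerivAt_div_mul_Wfun_div_two_mul (hane t ht) hκ₁d (hκ₁ne t ht) hκd hV
  simp only [deltaFun_sq_div_two_mul_sqrt a κ₁ κ hC₀, mul_assoc]
  refine ((hγ t ht).fun_add (((hE.const_mul 2).fun_inv
    (mul_ne_zero two_ne_zero hE_ne)).fun_mul hprod)).congr_deriv ?_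
  field_simp
  ring

/-- Constancy of the phase parameter: if κ₁ solves the homogeneous
equation, κ solves the Ermakov equation with C₀ > 0, and γ′ + a/κ₁² = 0, then
γ + (δ²/(2√C₀))·(κ/κ₁)·(W/(2a)) has identically zero derivative. -/
theorem statement_18
    (a b c d κ₁ κ γ : ℝ → ℝ) (t₁ t₂ : ℝ) (C₀ : ℝ) (hC₀ : 0 < C₀)
    (ha : ContDiff ℝ 1 a) (hc : ContDiff ℝ 1 c) (hd : ContDiff ℝ 1 d)
    (hb : Continuous b)
    (hane : ∀ t ∈ Set.Ioo t₁ t₂, a t ≠ 0)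
    (hκ₁ : ContDiffOn ℝ 2 κ₁ (Set.Ioo t₁ t₂)) (hκ : ContDiffOn ℝ 2 κ (Set.Ioo t₁ t₂))
    (hκ₁ne : ∀ t ∈ Set.Ioo t₁ t₂, κ₁ t ≠ 0) (hκne : ∀ t ∈ Set.Ioo t₁ t₂, κ t ≠ 0)
    (hEq1 : ∀ t ∈ Set.Ioo t₁ t₂, deriv (deriv κ₁) t - (deriv a t / a t) * deriv κ₁ t
        + Qfun a b c d t * κ₁ t = 0)
    (hEq : ∀ t ∈ Set.Ioo t₁ t₂, deriv (deriv κ) t - (deriv a t / a t) * deriv κ t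
        + Qfun a b c d t * κ t = C₀ * (2 * a t) ^ 2 / κ t ^ 3)
    (hγ : ∀ t ∈ Set.Ioo t₁ t₂, HasDerivAt γ (-(a t) / κ₁ t ^ 2) t) :
    ∀ t ∈ Set.Ioo t₁ t₂,
      deriv (fun s => γ s + (deltaFun a κ₁ κ C₀ s) ^ 2 / (2 * Real.sqrt C₀)
          * (κ s / κ₁ s) * (Wfun κ₁ κ s / (2 * a s))) t = 0 :=
  fun _ ht => (statement_18_general (Q := Qfun a b c d) isOpen_Ioo hC₀
    (ha.differentiable one_ne_zero).differentiableOn hane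
    (hκ₁.differentiableOn two_ne_zero) (differentiableOn_deriv_of_contDiffOn_two isOpen_Ioo hκ₁)
    (hκ.differentiableOn two_ne_zero) (differentiableOn_deriv_of_contDiffOn_two isOpen_Ioo hκ)
    hκ₁ne hκne hEq1 hEq hγ ht).deriv
end

section
/- (Time-dependent oscillator wave functions solve the Schrödinger equation.) Let a, b, c, d : ℝ → ℝ with a, c, d continuously differentiable, b continuous, a(t) ≠ 0 on an open interval I containing 0, let C₀ > 0, and let κ : I → ℝ be a twice continuously differentiable positive solution of the Ermakov equation κ′′ − (a′/a)κ′ + [4ab + (a′/a − c − d)(c+d) − c′ − d′]κ = C₀(2a)²/κ³. Set ε(t) = C₀^{1/4}/κ(t), θ(t) = (κ′(t) − (c(t)+d(t))κ(t))/(4a(t)κ(t)), and let φ : I → ℝ be differentiable with φ′(t) = 2√C₀·a(t)/κ(t)². Then for every natural number m, the function ψₘ(x,t) = exp(½∫₀ᵗ(d(s) − c(s))ds)·e^{−i(m+1/2)φ(t)}·√(ε(t))·exp(iθ(t)x²)·exp(−ε(t)²x²/2)·Hₘ(ε(t)x), with Hₘ the m-th physicists' Hermite polynomial, satisfies the time-dependent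 Schrödinger equation i ∂ψₘ/∂t = Hψₘ on ℝ × I, i.e. i(ψₘ)_t = −a(ψₘ)_xx + bx²ψₘ − ic(ψₘ + x(ψₘ)_x) − id·x(ψₘ)_x. -/
/-- The physicists' Hermite polynomials: H₀ = 1, Hₘ₊₁(ξ) = 2ξHₘ(ξ) − Hₘ′(ξ). -/
noncomputable def physHermite : ℕ → Polynomial ℝ
  | 0 => 1
  | n + 1 => 2 * Polynomial.X * physHermite n - Polynomial.derivative (physHermite n)

/-- Hₘ(x), the m-th physicists' Hermite polynomial evaluated at x. -/
noncomputable def pH (m : ℕ) (x : ℝ) : ℝ := (physHermite m).eval x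

/-- ε(t) = C₀^{1/4}/κ(t). -/
noncomputable def epsFun (κ : ℝ → ℝ) (C₀ t : ℝ) : ℝ := C₀ ^ ((1 : ℝ) / 4) / κ t

/-- θ(t) = (κ′ − (c+d)κ)/(4aκ). -/
noncomputable def thetaFun (a c d κ : ℝ → ℝ) (t : ℝ) : ℝ :=
  (deriv κ t - (c t + d t) * κ t) / (4 * a t * κ t)

/-- The time-dependent oscillator wave function
ψₘ(x,t) = exp(½∫₀ᵗ(d−c))·e^{−i(m+1/2)φ(t)}·√ε(t)·exp(iθ(t)x²)·exp(−ε²x²/2)·Hₘ(εx). -/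
noncomputable def psiWave (a c d κ φ : ℝ → ℝ) (C₀ : ℝ) (m : ℕ) (x t : ℝ) : ℂ :=
  (Real.exp ((1 / 2) * ∫ s in (0:ℝ)..t, d s - c s) : ℂ) *
    Complex.exp (-Complex.I * ((m : ℂ) + 1 / 2) * (φ t : ℂ)) *
    (Real.sqrt (epsFun κ C₀ t) : ℂ) *
    Complex.exp (Complex.I * (thetaFun a c d κ t : ℂ) * (x : ℂ) ^ 2) *
    (Real.exp (-(epsFun κ C₀ t) ^ 2 * x ^ 2 / 2) : ℂ) *
    (pH m (epsFun κ C₀ t * x) : ℂ)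

/-!
At each time `ψₘ` is a Gaussian packet `A exp(g x²) Hₘ(ε x)` with `g = iθ - ε²/2`. Since `Hₘ″` is
eliminated by Hermite's equation, applying `i∂ₜ - H` to such a packet leaves a combination of
`x² exp(g x²) Hₘ(ε x)`, `x exp(g x²) Hₘ′(ε x)` and `exp(g x²) Hₘ(ε x)`. The three coefficients
vanish when `g` solves a Riccati equation and `ε` and `A` have prescribed logarithmic derivatives.
For `θ = (κ′ - (c+d)κ)/(4aκ)` and `ε = C₀^{1/4}/κ` the Riccati equation is the Ermakov equation,
and the three factors of the amplitude `A` add up to the required logarithmic derivative.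
-/

section Hermite

open Polynomial

theorem physHermite_succ (n : ℕ) :
    physHermite (n + 1) = 2 * X * physHermite n - derivative (physHermite n) := rfl

theorem derivative_physHermite_succ (n : ℕ) :
    derivative (physHermite (n + 1)) = 2 * (n + 1) * physHermite n := by
  induction n with
  | zero => simp [physHermite]
  | succ n ih =>
    rw [physHermite_succ (n + 1), derivative_sub, ih]
    simp only [derivative_mul, derivative_add, derivative_X, derivative_ofNat, derivative_natCast,
      derivative_one, ih]
    rw [physHermite_succ n]
    push_cast
    ring

theorem derivative_derivative_physHermite (n : ℕ) :
    derivative (derivative (physHermite n)) =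
      2 * X * derivative (physHermite n) - 2 * (n : ℝ[X]) * physHermite n := by
  have raising : derivative (derivative (physHermite n)) =
      derivative (2 * X * physHermite n - physHermite (n + 1)) := by
    rw [physHermite_succ, sub_sub_cancel]
  rw [raising, derivative_sub, derivative_physHermite_succ]
  simp only [derivative_mul, derivative_X, derivative_ofNat]
  ring

end Hermite

section GaussianPacket

open Polynomial

/-- The Gaussian packet `x ↦ A exp(g x²) P(ε x)`. All parameters are complex, so that the phase
`exp(iθx²)` and the envelope `exp(-ε²x²/2)` of a wave function merge into a single exponential. -/
noncomputable def gaussianPacket (A g ε : ℂ) (P : ℂ[X]) (x : ℝ) : ℂ :=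
  A * Complex.exp (g * (x : ℂ) ^ 2) * P.eval (ε * x)

/-- The Hamiltonian `a p² + b x² + c p x + d x p`, with `p = -i ∂/∂x`, applied to `ψ` at a fixed
time; the coefficients are its values at that time. -/
noncomputable def quadraticHamiltonian (a b c d : ℂ) (ψ : ℝ → ℂ) (x : ℝ) : ℂ :=
  -a * deriv (deriv ψ) x + b * (x : ℂ) ^ 2 * ψ x
    - Complex.I * c * (ψ x + (x : ℂ) * deriv ψ x) - Complex.I * d * ((x : ℂ) * deriv ψ x)

theorem hasDerivAt_mul_cexp_mul_eval {A G z : ℝ → ℂ} {A' G' z' : ℂ} {s : ℝ} (P : ℂ[X])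
    (hA : HasDerivAt A A' s) (hG : HasDerivAt G G' s) (hz : HasDerivAt z z' s) :
    HasDerivAt (fun r => A r * Complex.exp (G r) * P.eval (z r))
      ((A' + A s * G') * Complex.exp (G s) * P.eval (z s)
        + z' * (A s * Complex.exp (G s) * (derivative P).eval (z s))) s := by
  have hP : HasDerivAt (fun r => P.eval (z r)) ((derivative P).eval (z s) * z') s :=
    (P.hasDerivAt (z s)).comp s hz
  exact ((hA.mul hG.cexp).mul hP).congr_deriv (by simp only [Pi.mul_apply]; ring)

theorem hasDerivAt_gaussianPacket (A g ε : ℂ) (P : ℂ[X]) (x : ℝ) :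
    HasDerivAt (gaussianPacket A g ε P)
      (2 * g * x * gaussianPacket A g ε P x + ε * gaussianPacket A g ε (derivative P) x) x := by
  have hx : HasDerivAt (fun y : ℝ => (y : ℂ)) 1 x := (hasDerivAt_id x).ofReal_comp
  refine (hasDerivAt_mul_cexp_mul_eval P (hasDerivAt_const x A) ((hx.pow 2).const_mul g)
    (hx.const_mul ε)).congr_deriv ?_
  simp only [gaussianPacket, Pi.pow_apply, Nat.cast_ofNat]
  ring

theorem deriv_gaussianPacket (A g ε : ℂ) (P : ℂ[X]) :
    deriv (gaussianPacket A g ε P) = fun x : ℝ =>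
      2 * g * x * gaussianPacket A g ε P x + ε * gaussianPacket A g ε (derivative P) x :=
  funext fun x => (hasDerivAt_gaussianPacket A g ε P x).deriv

theorem deriv_deriv_gaussianPacket (A g ε : ℂ) (P : ℂ[X]) (x : ℝ) :
    deriv (deriv (gaussianPacket A g ε P)) x =
      (2 * g + 4 * g ^ 2 * x ^ 2) * gaussianPacket A g ε P x
        + 4 * g * ε * x * gaussianPacket A g ε (derivative P) x
        + ε ^ 2 * gaussianPacket A g ε (derivative (derivative P)) x := by
  have hx : HasDerivAt (fun y : ℝ => 2 * g * (y : ℂ)) (2 * g) x := by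
    simpa using (hasDerivAt_id x).ofReal_comp.const_mul (2 * g)
  rw [deriv_gaussianPacket]
  refine (((hx.mul (hasDerivAt_gaussianPacket A g ε P x)).add
    ((hasDerivAt_gaussianPacket A g ε (derivative P) x).const_mul ε)).congr_deriv ?_).deriv
  ring

theorem gaussianPacket_derivative_derivative_of_hermite {P : ℂ[X]} {μ : ℂ}
    (hP : derivative (derivative P) = 2 * X * derivative P - 2 * C μ * P) (A g ε : ℂ) (x : ℝ) :
    gaussianPacket A g ε (derivative (derivative P)) x =
      2 * ε * x * gaussianPacket A g ε (derivative P) x - 2 * μ * gaussianPacket A g ε P x := by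
  simp only [gaussianPacket, hP, eval_sub, eval_mul, eval_ofNat, eval_X, eval_C]
  ring

theorem hasDerivAt_gaussianPacket_time {A g ε : ℝ → ℂ} {r g' ε' : ℂ} {t : ℝ} (P : ℂ[X]) (x : ℝ)
    (hA : HasDerivAt A (r * A t) t) (hg : HasDerivAt g g' t) (hε : HasDerivAt ε ε' t) :
    HasDerivAt (fun s => gaussianPacket (A s) (g s) (ε s) P x)
      ((r + g' * x ^ 2) * gaussianPacket (A t) (g t) (ε t) P x
        + ε' * x * gaussianPacket (A t) (g t) (ε t) (derivative P) x) t := by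
  refine (hasDerivAt_mul_cexp_mul_eval P hA (hg.mul_const ((x : ℂ) ^ 2))
    (hε.mul_const (x : ℂ))).congr_deriv ?_
  simp only [gaussianPacket]
  ring

theorem hasDerivAt_gaussianPacket_of_riccati {a b c d : ℂ} {A g ε : ℝ → ℂ} {P : ℂ[X]} {μ : ℂ}
    {t : ℝ} (hP : derivative (derivative P) = 2 * X * derivative P - 2 * C μ * P)
    (hA : HasDerivAt A ((2 * Complex.I * a * (g t - μ * ε t ^ 2) - c) * A t) t)
    (hg : HasDerivAt g (4 * Complex.I * a * g t ^ 2 - 2 * (c + d) * g t - Complex.I * b) t)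
    (hε : HasDerivAt ε ((2 * Complex.I * a * (2 * g t + ε t ^ 2) - (c + d)) * ε t) t) (x : ℝ) :
    HasDerivAt (fun s => gaussianPacket (A s) (g s) (ε s) P x)
      (-Complex.I * quadraticHamiltonian a b c d (gaussianPacket (A t) (g t) (ε t) P) x) t := by
  refine (hasDerivAt_gaussianPacket_time P x hA hg hε).congr_deriv ?_
  rw [quadraticHamiltonian, deriv_deriv_gaussianPacket,
    gaussianPacket_derivative_derivative_of_hermite hP, deriv_gaussianPacket]
  linear_combination -(c + (c + d) * 2 * g t * x ^ 2) * gaussianPacket (A t) (g t) (ε t) P x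
    * Complex.I_sq - (c + d) * x * ε t * gaussianPacket (A t) (g t) (ε t) (derivative P) x
    * Complex.I_sq

/-- The complex coefficient `iθ - ε²/2` of `x²` in the exponent of a wave function with chirp `θ`
and inverse width `ε`. -/
noncomputable def gaussianExponent (θ ε : ℝ) : ℂ := Complex.I * θ - (ε : ℂ) ^ 2 / 2

theorem hasDerivAt_gaussianExponent {a b c d : ℝ} {ε θ : ℝ → ℝ} {t : ℝ}
    (hε : HasDerivAt ε (-(4 * a * θ t + (c + d)) * ε t) t)
    (hθ : HasDerivAt θ (a * ε t ^ 4 - 4 * a * θ t ^ 2 - 2 * (c + d) * θ t - b) t) :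
    HasDerivAt (fun s => gaussianExponent (θ s) (ε s))
      (4 * Complex.I * a * gaussianExponent (θ t) (ε t) ^ 2
        - 2 * (c + d) * gaussianExponent (θ t) (ε t) - Complex.I * b) t := by
  refine ((hθ.ofReal_comp.const_mul Complex.I).sub
    ((hε.ofReal_comp.pow 2).div_const 2)).congr_deriv ?_
  simp only [gaussianExponent]
  push_cast
  linear_combination (4 * a * θ t * ε t ^ 2 - 4 * a * Complex.I * θ t ^ 2) * Complex.I_sq

end GaussianPacket

section ErmakovVariables

variable {a b c d κ : ℝ → ℝ} {C₀ t : ℝ}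

theorem epsFun_sq (κ : ℝ → ℝ) (hC₀ : 0 ≤ C₀) (t : ℝ) : epsFun κ C₀ t ^ 2 = √C₀ / κ t ^ 2 := by
  have hsq : (C₀ ^ ((1 : ℝ) / 4)) ^ 2 = √C₀ := by
    rw [Real.sqrt_eq_rpow, ← Real.rpow_mul_natCast hC₀]
    norm_num
  rw [epsFun, div_pow, hsq]

theorem epsFun_pow_four (κ : ℝ → ℝ) (hC₀ : 0 ≤ C₀) (t : ℝ) :
    epsFun κ C₀ t ^ 4 = C₀ / κ t ^ 4 := by
  calc epsFun κ C₀ t ^ 4 = (epsFun κ C₀ t ^ 2) ^ 2 := by ring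
    _ = C₀ / κ t ^ 4 := by rw [epsFun_sq κ hC₀, div_pow, Real.sq_sqrt hC₀, ← pow_mul]

theorem hasDerivAt_epsFun (hκ : DifferentiableAt ℝ κ t) (ha0 : a t ≠ 0) (hκ0 : κ t ≠ 0) :
    HasDerivAt (epsFun κ C₀)
      (-(4 * a t * thetaFun a c d κ t + (c t + d t)) * epsFun κ C₀ t) t := by
  refine ((hasDerivAt_const t (C₀ ^ ((1 : ℝ) / 4))).div hκ.hasDerivAt hκ0).congr_deriv ?_
  simp only [thetaFun, epsFun]
  field_simp
  ring

theorem hasDerivAt_thetaFun (hC₀ : 0 ≤ C₀) (ha : DifferentiableAt ℝ a t)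
    (hc : DifferentiableAt ℝ c t) (hd : DifferentiableAt ℝ d t) (hκ : DifferentiableAt ℝ κ t)
    (hκ' : DifferentiableAt ℝ (deriv κ) t) (ha0 : a t ≠ 0) (hκ0 : κ t ≠ 0)
    (hErm : deriv (deriv κ) t - (deriv a t / a t) * deriv κ t + Qfun a b c d t * κ t =
      C₀ * (2 * a t) ^ 2 / κ t ^ 3) :
    HasDerivAt (thetaFun a c d κ)
      (a t * epsFun κ C₀ t ^ 4 - 4 * a t * thetaFun a c d κ t ^ 2
        - 2 * (c t + d t) * thetaFun a c d κ t - b t) t := by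
  have hκ'' : deriv (deriv κ) t = C₀ * (2 * a t) ^ 2 / κ t ^ 3
      + (deriv a t / a t) * deriv κ t - Qfun a b c d t * κ t := by linear_combination hErm
  refine ((hκ'.hasDerivAt.sub ((hc.hasDerivAt.add hd.hasDerivAt).mul hκ.hasDerivAt)).div
    ((ha.hasDerivAt.const_mul 4).mul hκ.hasDerivAt) (by simp [ha0, hκ0])).congr_deriv ?_
  simp only [Pi.add_apply, Pi.sub_apply, Pi.mul_apply]
  rw [hκ'', epsFun_pow_four κ hC₀]
  simp only [thetaFun, Qfun]
  field_simp
  ring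

end ErmakovVariables

section WaveFunction

open Polynomial

/-- The factor `exp(½∫₀ᵗ(d - c)) e^{-i(m+1/2)φ(t)} √ε(t)` of `psiWave` that does not depend
on `x`. -/
noncomputable def waveAmplitude (c d φ ε : ℝ → ℝ) (m : ℕ) (t : ℝ) : ℂ :=
  (Real.exp ((1 / 2) * ∫ s in (0 : ℝ)..t, d s - c s) : ℂ) *
    Complex.exp (-Complex.I * ((m : ℂ) + 1 / 2) * (φ t : ℂ)) * (√(ε t) : ℂ)

theorem psiWave_eq_gaussianPacket (a c d κ φ : ℝ → ℝ) (C₀ : ℝ) (m : ℕ) (x t : ℝ) :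
    psiWave a c d κ φ C₀ m x t =
      gaussianPacket (waveAmplitude c d φ (epsFun κ C₀) m t)
        (gaussianExponent (thetaFun a c d κ t) (epsFun κ C₀ t)) (epsFun κ C₀ t)
        ((physHermite m).map Complex.ofRealHom) x := by
  have hexp : Complex.exp (gaussianExponent (thetaFun a c d κ t) (epsFun κ C₀ t) * (x : ℂ) ^ 2) =
      Complex.exp (Complex.I * (thetaFun a c d κ t : ℂ) * (x : ℂ) ^ 2)
        * (Real.exp (-(epsFun κ C₀ t) ^ 2 * x ^ 2 / 2) : ℂ) := by
    rw [Complex.ofReal_exp, ← Complex.exp_add, gaussianExponent]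
    push_cast
    ring_nf
  have hpoly : ((physHermite m).map Complex.ofRealHom).eval ((epsFun κ C₀ t : ℂ) * x) =
      (pH m (epsFun κ C₀ t * x) : ℂ) := by
    rw [← Complex.ofReal_mul, pH]
    exact eval_map_apply Complex.ofRealHom _
  rw [gaussianPacket, hexp, hpoly, psiWave, waveAmplitude]
  ring

theorem derivative_derivative_map_physHermite (m : ℕ) :
    derivative (derivative ((physHermite m).map Complex.ofRealHom)) =
      2 * X * derivative ((physHermite m).map Complex.ofRealHom)
        - 2 * C (m : ℂ) * (physHermite m).map Complex.ofRealHom := by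
  simp [derivative_map, derivative_derivative_physHermite]

theorem hasDerivAt_sqrt_of_logDeriv {ε : ℝ → ℝ} {ρ t : ℝ} (hε : HasDerivAt ε (ρ * ε t) t)
    (hpos : 0 < ε t) : HasDerivAt (fun s => √(ε s)) (ρ / 2 * √(ε t)) t := by
  refine (hε.sqrt hpos.ne').congr_deriv ?_
  rw [mul_div_assoc, mul_comm 2, ← div_div, Real.div_sqrt]
  ring

theorem hasDerivAt_waveAmplitude {c d φ ε : ℝ → ℝ} {ω ρ t : ℝ} {I : Set ℝ} (m : ℕ)
    (hI : IsOpen I) (hIc : I.OrdConnected) (h0 : 0 ∈ I) (ht : t ∈ I)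
    (hc : ContinuousOn c I) (hd : ContinuousOn d I) (hφ : HasDerivAt φ ω t)
    (hε : HasDerivAt ε (ρ * ε t) t) (hpos : 0 < ε t) :
    HasDerivAt (waveAmplitude c d φ ε m)
      (((d t - c t) / 2 - Complex.I * (m + 1 / 2) * ω + ρ / 2) * waveAmplitude c d φ ε m t) t := by
  have hdc : ContinuousOn (fun s => d s - c s) I := hd.sub hc
  have hint : HasDerivAt (fun t => ∫ s in (0 : ℝ)..t, d s - c s) (d t - c t) t :=
    intervalIntegral.integral_hasDerivAt_right
      (hdc.mono (hIc.uIcc_subset h0 ht)).intervalIntegrable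
      (hdc.stronglyMeasurableAtFilter hI t ht) (hdc.continuousAt (hI.mem_nhds ht))
  have hphase := (hφ.ofReal_comp.const_mul (-Complex.I * ((m : ℂ) + 1 / 2))).cexp
  refine (((hint.const_mul (1 / 2)).exp.ofReal_comp.mul hphase).mul
    (hasDerivAt_sqrt_of_logDeriv hε hpos).ofReal_comp).congr_deriv ?_
  simp only [waveAmplitude, Pi.mul_apply]
  push_cast
  ring

theorem statement_19_general {I : Set ℝ} (hI : IsOpen I) (hIc : I.OrdConnected) (h0 : 0 ∈ I)
    {a b c d κ φ : ℝ → ℝ} {C₀ : ℝ} (hC₀ : 0 < C₀)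
    (ha : DifferentiableOn ℝ a I) (hc : DifferentiableOn ℝ c I) (hd : DifferentiableOn ℝ d I)
    (hκ : DifferentiableOn ℝ κ I) (hκ' : DifferentiableOn ℝ (deriv κ) I)
    (ha0 : ∀ t ∈ I, a t ≠ 0) (hκpos : ∀ t ∈ I, 0 < κ t)
    (hErm : ∀ t ∈ I, deriv (deriv κ) t - (deriv a t / a t) * deriv κ t
      + Qfun a b c d t * κ t = C₀ * (2 * a t) ^ 2 / κ t ^ 3)
    (hφ : ∀ t ∈ I, HasDerivAt φ (2 * √C₀ * a t / κ t ^ 2) t) (m : ℕ) (x : ℝ) {t : ℝ}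
    (ht : t ∈ I) :
    HasDerivAt (fun s => psiWave a c d κ φ C₀ m x s)
      (-Complex.I * quadraticHamiltonian (a t) (b t) (c t) (d t)
        (fun y => psiWave a c d κ φ C₀ m y t) x) t := by
  have hIt : I ∈ nhds t := hI.mem_nhds ht
  have hκ0 : κ t ≠ 0 := (hκpos t ht).ne'
  have hε := hasDerivAt_epsFun (c := c) (d := d) (C₀ := C₀) (hκ.differentiableAt hIt)
    (ha0 t ht) hκ0
  have hθ := hasDerivAt_thetaFun hC₀.le (ha.differentiableAt hIt) (hc.differentiableAt hIt)
    (hd.differentiableAt hIt) (hκ.differentiableAt hIt) (hκ'.differentiableAt hIt) (ha0 t ht)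
    hκ0 (hErm t ht)
  have hφε : HasDerivAt φ (2 * a t * epsFun κ C₀ t ^ 2) t :=
    (hφ t ht).congr_deriv (by rw [epsFun_sq κ hC₀.le]; ring)
  have hA := hasDerivAt_waveAmplitude m hI hIc h0 ht hc.continuousOn hd.continuousOn hφε hε
    (div_pos (Real.rpow_pos_of_pos hC₀ _) (hκpos t ht))
  simp only [psiWave_eq_gaussianPacket]
  refine hasDerivAt_gaussianPacket_of_riccati (derivative_derivative_map_physHermite m)
    (hA.congr_deriv ?_) (hasDerivAt_gaussianExponent hε hθ) (hε.ofReal_comp.congr_deriv ?_) x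
  · simp only [gaussianExponent]
    push_cast
    linear_combination (-2 * a t * thetaFun a c d κ t)
      * waveAmplitude c d φ (epsFun κ C₀) m t * Complex.I_sq
  · simp only [gaussianExponent]
    push_cast
    linear_combination (-4 * a t * thetaFun a c d κ t) * (epsFun κ C₀ t) * Complex.I_sq

end WaveFunction

/-- Time-dependent oscillator wave functions solve the Schrödinger
equation: if κ is a positive solution of the Ermakov equation with C₀ > 0 on an open
interval (t₁,t₂) containing 0 and φ′ = 2√C₀·a/κ², then for every m the wave function
ψₘ satisfies i(ψₘ)_t = −a(ψₘ)_xx + bx²ψₘ − ic(ψₘ + x(ψₘ)_x) − id·x(ψₘ)_x. -/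
theorem statement_19
    (a b c d κ φ : ℝ → ℝ) (t₁ t₂ : ℝ) (C₀ : ℝ) (hC₀ : 0 < C₀)
    (ha : ContDiff ℝ 1 a) (hc : ContDiff ℝ 1 c) (hd : ContDiff ℝ 1 d)
    (hb : Continuous b)
    (hane : ∀ t ∈ Set.Ioo t₁ t₂, a t ≠ 0)
    (h0 : (0 : ℝ) ∈ Set.Ioo t₁ t₂)
    (hκ : ContDiffOn ℝ 2 κ (Set.Ioo t₁ t₂))
    (hκpos : ∀ t ∈ Set.Ioo t₁ t₂, 0 < κ t)
    -- the Ermakov equation κ′′ − (a′/a)κ′ + Qκ = C₀(2a)²/κ³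
    (hErm : ∀ t ∈ Set.Ioo t₁ t₂, deriv (deriv κ) t - (deriv a t / a t) * deriv κ t
        + Qfun a b c d t * κ t = C₀ * (2 * a t) ^ 2 / κ t ^ 3)
    -- the phase equation φ′ = 2√C₀·a/κ²
    (hφ : ∀ t ∈ Set.Ioo t₁ t₂, HasDerivAt φ (2 * Real.sqrt C₀ * a t / κ t ^ 2) t) :
    ∀ m : ℕ, ∀ x : ℝ, ∀ t ∈ Set.Ioo t₁ t₂,
      Complex.I * deriv (fun t' => psiWave a c d κ φ C₀ m x t') t =
        -(a t : ℂ) * deriv (fun x' => deriv (fun x'' => psiWave a c d κ φ C₀ m x'' t) x') x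
          + (b t : ℂ) * (x : ℂ) ^ 2 * psiWave a c d κ φ C₀ m x t
          - Complex.I * (c t : ℂ) *
              (psiWave a c d κ φ C₀ m x t
                + (x : ℂ) * deriv (fun x' => psiWave a c d κ φ C₀ m x' t) x)
          - Complex.I * (d t : ℂ) *
              ((x : ℂ) * deriv (fun x' => psiWave a c d κ φ C₀ m x' t) x) := by
  intro m x t ht
  have hψ := statement_19_general isOpen_Ioo Set.ordConnected_Ioo h0 hC₀
    (ha.differentiable one_ne_zero).differentiableOn
    (hc.differentiable one_ne_zero).differentiableOn
    (hd.differentiable one_ne_zero).differentiableOn (hκ.differentiableOn two_ne_zero)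
    ((hκ.deriv_of_isOpen isOpen_Ioo (m := 1) (by norm_num)).differentiableOn one_ne_zero)
    hane hκpos hErm hφ m x ht
  rw [hψ.deriv, ← mul_assoc, mul_neg, Complex.I_mul_I, neg_neg, one_mul]
  rfl
end
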